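/- arXiv:2009.00315 — 2 statements merged into one kernel-verified Lean document; each statement's English description precedes it below -/
import Mathlib

section
/- The set {⌜η⌝ : ℕ ⊨ η} of Gödel codes of true arithmetical sentences is not definable in ℕ by any arithmetical formula. -/
open FirstOrder Language

/-- Function symbols of the language of arithmetic: 0, 1, +, ×. -/
inductive ArithFunc : ℕ → Type
  | zero : ArithFunc 0
  | one : ArithFunc 0
  | add : ArithFunc 2
  | mul : ArithFunc 2

/-- Relation symbols of the language of arithmetic: <. -/
inductive ArithRel : ℕ → Type
  | lt : ArithRel 2

/-- The first-order language of arithmetic. -/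
def LA : FirstOrder.Language := ⟨ArithFunc, ArithRel⟩

/-- The standard model ℕ of arithmetic. -/
instance : LA.Structure ℕ where
  funMap := fun {_} f => match f with
    | .zero => fun _ => 0
    | .one => fun _ => 1
    | .add => fun v => v 0 + v 1
    | .mul => fun v => v 0 * v 1
  RelMap := fun {_} r => match r with
    | .lt => fun v => v 0 < v 1

instance : Encodable (Σ n, LA.Functions n) :=
  Encodable.ofEquiv (Fin 4)
    { toFun := fun f => match f with
        | ⟨0, .zero⟩ => 0
        | ⟨0, .one⟩ => 1
        | ⟨2, .add⟩ => 2
        | ⟨2, .mul⟩ => 3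
      invFun := fun i => match i with
        | 0 => ⟨0, .zero⟩
        | 1 => ⟨0, .one⟩
        | 2 => ⟨2, .add⟩
        | 3 => ⟨2, .mul⟩
      left_inv := by rintro ⟨n, f⟩ <;> cases f <;> rfl
      right_inv := by intro i; fin_cases i <;> rfl }

instance : Encodable (Σ n, LA.Relations n) :=
  Encodable.ofEquiv (Fin 1)
    { toFun := fun f => match f with
        | ⟨2, .lt⟩ => 0
      invFun := fun _ => ⟨2, .lt⟩
      left_inv := by rintro ⟨n, r⟩; cases r; rfl
      right_inv := by intro i; fin_cases i; rfl }

/-- A canonical (computable, injective) Gödel numbering `⌜·⌝` of sentences,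
via Mathlib's list encoding of first-order formulas. -/
def godelCode (φ : LA.Sentence) : ℕ :=
  Encodable.encode φ.listEncode

/-- The numeral `n̄`: `0̄ = 0`, `1̄ = 1`, `(m+1)̄ = 1 + m̄`. -/
def numeral (α : Type) : ℕ → LA.Term α
  | 0 => Constants.term ArithFunc.zero
  | 1 => Constants.term ArithFunc.one
  | n + 2 => Functions.apply₂ (L := LA) ArithFunc.add
      (Constants.term ArithFunc.one) (numeral α (n + 1))

/-- `ℕ ⊨ Ψ(⌜θ⌝)`: the formula `Ψ(x)` holds in the standard model ℕ at the
Gödel code of the sentence `θ`. -/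
def RealizeAtCode (Ψ : LA.Formula (Fin 1)) (θ : LA.Sentence) : Prop :=
  Ψ.Realize (M := ℕ) (fun _ => (godelCode θ : ℕ))

/-- A theory is consistent iff it does not prove (have as a consequence) falsum. -/
def Consistent (T : LA.Theory) : Prop :=
  ¬ (T ⊨ᵇ (⊥ : LA.Sentence))

/-- The sentence `Ψ(⌜θ⌝) ↔ θ`. -/
def diagBicond (Ψ : LA.Formula (Fin 1)) (θ : LA.Sentence) : LA.Sentence :=
  (Ψ.subst (fun _ => numeral Empty (godelCode θ))) ⇔ θ

/-- The term `t + 1` (successor). -/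
def succT {α : Type} {n : ℕ} (t : LA.Term (α ⊕ Fin n)) : LA.Term (α ⊕ Fin n) :=
  Functions.apply₂ (L := LA) ArithFunc.add t (Constants.term ArithFunc.one)

/-- The term `0`. -/
def zeroT {α : Type} {n : ℕ} : LA.Term (α ⊕ Fin n) := Constants.term (L := LA) ArithFunc.zero

/-- The term `t + s`. -/
def addT {α : Type} {n : ℕ} (t s : LA.Term (α ⊕ Fin n)) : LA.Term (α ⊕ Fin n) :=
  Functions.apply₂ (L := LA) ArithFunc.add t s

/-- The term `t * s`. -/
def mulT {α : Type} {n : ℕ} (t s : LA.Term (α ⊕ Fin n)) : LA.Term (α ⊕ Fin n) :=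
  Functions.apply₂ (L := LA) ArithFunc.mul t s

/-- The atomic formula `t < s`. -/
def ltF {α : Type} {n : ℕ} (t s : LA.Term (α ⊕ Fin n)) : LA.BoundedFormula α n :=
  Relations.boundedFormula₂ (L := LA) ArithRel.lt t s

/-- Robinson's arithmetic Q. -/
def Q : LA.Theory :=
  { ∀' ∼(succT &0 =' zeroT),
    ∀' ∀' (succT &0 =' succT &1 ⟹ &0 =' &1),
    ∀' (∼(&0 =' zeroT) ⟹ ∃' (&0 =' succT &1)),
    ∀' (addT &0 zeroT =' &0),
    ∀' ∀' (addT &0 (succT &1) =' succT (addT &0 &1)),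
    ∀' (mulT &0 zeroT =' zeroT),
    ∀' ∀' (mulT &0 (succT &1) =' addT (mulT &0 &1) &0),
    ∀' ∀' (ltF &0 &1 ⇔ ∃' (addT &0 (succT &2) =' &1)) }

/-- A theory is recursively enumerable iff its set of Gödel codes is the domain
of a partial recursive function. -/
def RETheory (T : LA.Theory) : Prop :=
  ∃ f : ℕ →. Unit, Partrec f ∧ ∀ φ : LA.Sentence, φ ∈ T ↔ (f (godelCode φ)).Dom

/-! ### Definable predicates and functions (on streams of variables) -/

/-- Arithmetically definable predicates of a stream of variables. -/
def DP (P : (ℕ → ℕ) → Prop) : Prop :=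
  ∃ φ : LA.Formula ℕ, ∀ v : ℕ → ℕ, φ.Realize (M := ℕ) v ↔ P v

/-- Arithmetically definable functions of a stream of variables. -/
def DF (f : (ℕ → ℕ) → ℕ) : Prop :=
  DP (fun v => v 0 = f (fun i => v (i + 1)))

theorem DP.congr {P Q : (ℕ → ℕ) → Prop} (h : DP P) (e : ∀ v, P v ↔ Q v) : DP Q := by
  obtain ⟨φ, hφ⟩ := h
  exact ⟨φ, fun v => (hφ v).trans (e v)⟩

theorem DP.and {P Q : (ℕ → ℕ) → Prop} (h : DP P) (h' : DP Q) : DP (fun v => P v ∧ Q v) := by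
  obtain ⟨φ, hφ⟩ := h
  obtain ⟨ψ, hψ⟩ := h'
  exact ⟨φ ⊓ ψ, fun v => by rw [Formula.realize_inf, hφ, hψ]⟩

theorem DP.not {P : (ℕ → ℕ) → Prop} (h : DP P) : DP (fun v => ¬ P v) := by
  obtain ⟨φ, hφ⟩ := h
  exact ⟨∼φ, fun v => by rw [Formula.realize_not, hφ]⟩

theorem DP.or {P Q : (ℕ → ℕ) → Prop} (h : DP P) (h' : DP Q) : DP (fun v => P v ∨ Q v) :=
  (h.not.and h'.not).not.congr fun v => by tauto

theorem DP.imp {P Q : (ℕ → ℕ) → Prop} (h : DP P) (h' : DP Q) : DP (fun v => P v → Q v) :=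
  (h.and h'.not).not.congr fun v => by tauto

theorem DP.relabel {P : (ℕ → ℕ) → Prop} (h : DP P) (σ : ℕ → ℕ) :
    DP (fun v => P (fun i => v (σ i))) := by
  obtain ⟨φ, hφ⟩ := h
  exact ⟨Formula.relabel σ φ, fun v => by rw [Formula.realize_relabel, hφ]; rfl⟩

theorem DP.ex {P : ℕ → (ℕ → ℕ) → Prop} (h : DP (fun v => P (v 0) (fun i => v (i + 1)))) :
    DP (fun v => ∃ x, P x v) := by
  obtain ⟨φ, hφ⟩ := h
  let g : ℕ → ℕ ⊕ Fin 1 := fun i => match i with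
    | 0 => Sum.inr 0
    | i + 1 => Sum.inl i
  refine ⟨(BoundedFormula.relabel (n := 1) (k := 0) g φ).ex, fun v => ?_⟩
  rw [Formula.Realize, BoundedFormula.realize_ex]
  refine exists_congr fun x => ?_
  rw [BoundedFormula.realize_relabel]
  have := hφ (fun i => match i with
    | 0 => x
    | i + 1 => v i)
  refine Iff.trans ?_ this
  rw [Formula.Realize]
  refine iff_of_eq (congrArg₂ _ ?_ (Subsingleton.elim _ _))
  funext i
  cases i <;> rfl

theorem DP.all {P : ℕ → (ℕ → ℕ) → Prop} (h : DP (fun v => P (v 0) (fun i => v (i + 1)))) :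
    DP (fun v => ∀ x, P x v) :=
  (DP.ex (P := fun x v => ¬ P x v) h.not).not.congr fun v => by simp

theorem DF.relabel {f : (ℕ → ℕ) → ℕ} (h : DF f) (σ : ℕ → ℕ) :
    DF (fun v => f (fun i => v (σ i))) :=
  DP.relabel h (fun i => match i with
    | 0 => 0
    | i + 1 => σ i + 1)

theorem DF.tail {f : (ℕ → ℕ) → ℕ} (h : DF f) : DF (fun v => f (fun i => v (i + 1))) :=
  h.relabel _

theorem DP.subst {P : ℕ → (ℕ → ℕ) → Prop} {f : (ℕ → ℕ) → ℕ}
    (h : DP (fun v => P (v 0) (fun i => v (i + 1)))) (hf : DF f) : DP (fun v => P (f v) v) :=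
  (DP.ex (P := fun x v => x = f v ∧ P x v) (DP.and hf h)).congr fun v => by simp

theorem DP.comp1 {R : ℕ → Prop} (h : DP (fun v => R (v 0))) {f : (ℕ → ℕ) → ℕ} (hf : DF f) :
    DP (fun v => R (f v)) :=
  DP.subst (P := fun x _ => R x) h hf

theorem DP.comp2 {R : ℕ → ℕ → Prop} (h : DP (fun v => R (v 0) (v 1)))
    {f g : (ℕ → ℕ) → ℕ} (hf : DF f) (hg : DF g) : DP (fun v => R (f v) (g v)) := by
  refine DP.subst (P := fun x v => R x (g v)) ?_ hf
  exact DP.subst (P := fun y v => R (v 0) y)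
    (h.relabel (fun i => match i with
      | 0 => 1
      | 1 => 0
      | i => i)) hg.tail

theorem DP.comp3 {R : ℕ → ℕ → ℕ → Prop} (h : DP (fun v => R (v 0) (v 1) (v 2)))
    {f g k : (ℕ → ℕ) → ℕ} (hf : DF f) (hg : DF g) (hk : DF k) :
    DP (fun v => R (f v) (g v) (k v)) := by
  refine DP.subst (P := fun x v => R x (g v) (k v)) ?_ hf
  refine DP.subst (P := fun y v => R (v 0) y (k (fun i => v (i + 1)))) ?_ hg.tail
  exact DP.subst (P := fun z v => R (v 1) (v 0) z)
    (h.relabel (fun i => match i with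
      | 0 => 2
      | 1 => 1
      | 2 => 0
      | i => i)) hk.tail.tail

/-- Realization of an equation. -/
theorem DP.term (t s : LA.Term ℕ) :
    DP (fun v => t.realize (M := ℕ) v = s.realize (M := ℕ) v) :=
  ⟨t.equal s, fun v => by rw [Formula.realize_equal]⟩

theorem DF.var (k : ℕ) : DF (fun v => v k) :=
  DP.term (Term.var 0) (Term.var (k + 1))

theorem DF.tm (t : LA.Term ℕ) : DF (fun v => t.realize (M := ℕ) v) :=
  (DP.term (Term.var 0) (t.relabel Nat.succ)).congr fun v => by
    rw [Term.realize_relabel]; rfl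

theorem DF.comp1 {F : ℕ → ℕ} (h : DF (fun v => F (v 0)))
    {f : (ℕ → ℕ) → ℕ} (hf : DF f) : DF (fun v => F (f v)) :=
  DP.comp2 (R := fun x y => x = F y) h (DF.var 0) hf.tail

theorem DF.comp2 {F : ℕ → ℕ → ℕ} (h : DF (fun v => F (v 0) (v 1)))
    {f g : (ℕ → ℕ) → ℕ} (hf : DF f) (hg : DF g) : DF (fun v => F (f v) (g v)) :=
  DP.comp3 (R := fun x y z => x = F y z) h (DF.var 0) hf.tail hg.tail

theorem DF.add {f g : (ℕ → ℕ) → ℕ} (hf : DF f) (hg : DF g) : DF (fun v => f v + g v) :=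
  DF.comp2 (F := fun a b => a + b)
    (DF.tm (Functions.apply₂ (L := LA) ArithFunc.add (Term.var 0) (Term.var 1))) hf hg

theorem DF.mul {f g : (ℕ → ℕ) → ℕ} (hf : DF f) (hg : DF g) : DF (fun v => f v * g v) :=
  DF.comp2 (F := fun a b => a * b)
    (DF.tm (Functions.apply₂ (L := LA) ArithFunc.mul (Term.var 0) (Term.var 1))) hf hg

theorem DF.zero : DF (fun _ => 0) :=
  (DF.tm (Term.func (L := LA) ArithFunc.zero (fun i => i.elim0)))

theorem DF.one : DF (fun _ => 1) :=
  (DF.tm (Term.func (L := LA) ArithFunc.one (fun i => i.elim0)))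

theorem DF.const (n : ℕ) : DF (fun _ => n) := by
  induction n with
  | zero => exact DF.zero
  | succ n ih => exact ih.add DF.one

theorem DF.succ {f : (ℕ → ℕ) → ℕ} (hf : DF f) : DF (fun v => Nat.succ (f v)) :=
  hf.add DF.one

theorem DP.eq {f g : (ℕ → ℕ) → ℕ} (hf : DF f) (hg : DF g) : DP (fun v => f v = g v) :=
  DP.comp2 (R := fun a b => a = b) (DP.term (Term.var 0) (Term.var 1)) hf hg

theorem DP.lt {f g : (ℕ → ℕ) → ℕ} (hf : DF f) (hg : DF g) : DP (fun v => f v < g v) :=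
  (DP.ex (P := fun x v => f v + x + 1 = g v)
    (DP.eq ((hf.tail.add (DF.var 0)).add DF.one) hg.tail)).congr fun v => by
      constructor
      · rintro ⟨x, hx⟩; omega
      · intro h; exact ⟨g v - f v - 1, by omega⟩

/-- `a % (m + 1)`. -/
theorem DF.modS {f g : (ℕ → ℕ) → ℕ} (hf : DF f) (hg : DF g) :
    DF (fun v => f v % (g v + 1)) := by
  refine DF.comp2 (F := fun a m => a % (m + 1)) ?_ hf hg
  have h : DP (fun v => v 0 < v 2 + 1 ∧ ∃ q, v 1 = (v 2 + 1) * q + v 0) := by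
    refine DP.and (DP.lt (DF.var 0) ((DF.var 2).add DF.one)) ?_
    exact DP.ex (P := fun q v => v 1 = (v 2 + 1) * q + v 0)
      (DP.eq (DF.var 2) ((((DF.var 3).add DF.one).mul (DF.var 0)).add (DF.var 1)))
  refine h.congr fun v => ?_
  constructor
  · rintro ⟨h1, q, hq⟩
    show v 0 = v 1 % (v 2 + 1)
    rw [hq, Nat.mul_add_mod, Nat.mod_eq_of_lt h1]
  · intro h
    replace h : v 0 = v 1 % (v 2 + 1) := h
    refine ⟨h ▸ Nat.mod_lt _ (Nat.succ_pos _), v 1 / (v 2 + 1), ?_⟩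
    rw [h, Nat.div_add_mod]

theorem DF.pair {f g : (ℕ → ℕ) → ℕ} (hf : DF f) (hg : DF g) :
    DF (fun v => Nat.pair (f v) (g v)) := by
  refine DF.comp2 (F := fun a b => Nat.pair a b) ?_ hf hg
  have h : DP (fun v => (v 1 < v 2 ∧ v 0 = v 2 * v 2 + v 1) ∨
      (¬ v 1 < v 2 ∧ v 0 = v 1 * v 1 + v 1 + v 2)) := by
    have hl : DP (fun v => v 1 < v 2) := DP.lt (DF.var 1) (DF.var 2)
    exact (hl.and (DP.eq (DF.var 0) (((DF.var 2).mul (DF.var 2)).add (DF.var 1)))).or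
      (hl.not.and (DP.eq (DF.var 0)
        ((((DF.var 1).mul (DF.var 1)).add (DF.var 1)).add (DF.var 2))))
  refine h.congr fun v => ?_
  show _ ↔ v 0 = Nat.pair (v 1) (v 2)
  unfold Nat.pair
  split_ifs with h <;> simp [h]

/-- Gödel's beta lemma. -/
theorem beta_seq (s : ℕ → ℕ) (n : ℕ) :
    ∃ a b : ℕ, ∀ i ≤ n, a % ((i + 1) * b + 1) = s i := by
  let l := (List.range (n + 1)).map s
  refine ⟨(Nat.unbeta l).unpair.1, (Nat.unbeta l).unpair.2, fun i hi => ?_⟩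
  have := Nat.beta_unbeta_coe l ⟨i, by simp [l]; omega⟩
  simpa [Nat.beta, l] using this

/-- Definability of functions given by iteration. -/
theorem DF.iter {E step : ℕ → ℕ} (hs : DF (fun v => step (v 0)))
    (hE : ∀ n, E (n + 1) = step (E n)) : DF (fun v => E (v 0)) := by
  have h : DP (fun v => ∃ a, ∃ b, a % ((0 + 1) * b + 1) = E 0 ∧
      (∀ i, i < v 1 → a % ((i + 1 + 1) * b + 1) = step (a % ((i + 1) * b + 1))) ∧
      v 0 = a % ((v 1 + 1) * b + 1)) := by
    refine DP.ex (P := fun a v => ∃ b, a % ((0 + 1) * b + 1) = E 0 ∧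
      (∀ i, i < v 1 → a % ((i + 1 + 1) * b + 1) = step (a % ((i + 1) * b + 1))) ∧
      v 0 = a % ((v 1 + 1) * b + 1)) ?_
    refine DP.ex (P := fun b v => v 0 % ((0 + 1) * b + 1) = E 0 ∧
      (∀ i, i < v 2 → v 0 % ((i + 1 + 1) * b + 1) = step (v 0 % ((i + 1) * b + 1))) ∧
      v 1 = v 0 % ((v 2 + 1) * b + 1)) ?_
    refine DP.and ?_ (DP.and ?_ ?_)
    · exact DP.eq (DF.modS (DF.var 1) ((DF.const (0 + 1)).mul (DF.var 0))) (DF.const _)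
    · refine DP.all (P := fun i v => i < v 3 →
        v 1 % ((i + 1 + 1) * v 0 + 1) = step (v 1 % ((i + 1) * v 0 + 1))) ?_
      refine DP.imp (DP.lt (DF.var 0) (DF.var 4)) (DP.eq ?_ ?_)
      · exact DF.modS (DF.var 2) ((((DF.var 0).add DF.one).add DF.one).mul (DF.var 1))
      · exact DF.comp1 hs (DF.modS (DF.var 2) (((DF.var 0).add DF.one).mul (DF.var 1)))
    · exact DP.eq (DF.var 2) (DF.modS (DF.var 1) (((DF.var 3).add DF.one).mul (DF.var 0)))
  refine h.congr fun v => ?_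
  show _ ↔ v 0 = E (v 1)
  constructor
  · rintro ⟨a, b, h0, hi, h⟩
    have key : ∀ i, i ≤ v 1 → a % ((i + 1) * b + 1) = E i := by
      intro i
      induction i with
      | zero => intro _; exact h0
      | succ i ih => intro h; rw [hi i (by omega), ih (by omega), hE]
    rw [h, key _ le_rfl]
  · intro h
    obtain ⟨a, b, hab⟩ := beta_seq E (v 1)
    refine ⟨a, b, hab 0 (Nat.zero_le _), fun i hi => ?_, ?_⟩
    · rw [hab (i + 1) (by omega), hab i (by omega), hE]
    · rw [hab _ le_rfl, h]

/-! ### Numerals and the diagonal function -/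

/-- The numeral `1 + (1 + (... + 0))`. -/
def num : ℕ → LA.Term (Empty ⊕ Fin 1)
  | 0 => Term.func (L := LA) ArithFunc.zero (fun i => i.elim0)
  | n + 1 => Functions.apply₂ (L := LA) ArithFunc.add
      (Term.func (L := LA) ArithFunc.one (fun i => i.elim0)) (num n)

theorem num_realize (n : ℕ) (v : Empty ⊕ Fin 1 → ℕ) : (num n).realize (M := ℕ) v = n := by
  induction n with
  | zero => rfl
  | succ n ih =>
    have : (num (n + 1)).realize (M := ℕ) v = 1 + (num n).realize (M := ℕ) v := rfl
    rw [this, ih, add_comm]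

/-- Code of the numeral. -/
def numCode (n : ℕ) : ℕ := Encodable.encode (num n)

theorem numCode_succ : ∃ A B : ℕ, ∀ n,
    numCode (n + 1) = Nat.succ (Nat.pair A (Nat.succ (Nat.pair B (numCode n)))) := by
  refine ⟨Encodable.encode (Sum.inr ⟨2, ArithFunc.add⟩ :
      (Empty ⊕ Fin 1) ⊕ (Σ i, LA.Functions i)),
    Encodable.encode (Sum.inr ⟨0, ArithFunc.one⟩ :
      (Empty ⊕ Fin 1) ⊕ (Σ i, LA.Functions i)), fun n => ?_⟩
  have h : ∀ m, numCode m = Encodable.encode (num m).listEncode := fun _ => rfl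
  have hl : (num (n + 1)).listEncode = Sum.inr ⟨2, ArithFunc.add⟩ ::
      Sum.inr ⟨0, ArithFunc.one⟩ :: (num n).listEncode := by
    have : (num (n + 1)).listEncode = Sum.inr ⟨2, ArithFunc.add⟩ ::
      (Sum.inr ⟨0, ArithFunc.one⟩ :: ((num n).listEncode ++ [])) := rfl
    rw [this, List.append_nil]
  rw [h, h, hl, Encodable.encode_list_cons, Encodable.encode_list_cons]

theorem DF.numCode : DF (fun v => numCode (v 0)) := by
  obtain ⟨A, B, h⟩ := numCode_succ
  exact DF.iter (E := _root_.numCode)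
    (step := fun x => Nat.succ (Nat.pair A (Nat.succ (Nat.pair B x))))
    (DF.succ (DF.pair (DF.const A) (DF.succ (DF.pair (DF.const B) (DF.var 0))))) h

/-- The sentence `∀ x, x = n → Φ x`. -/
def diag (Φ : LA.BoundedFormula Empty 1) (n : ℕ) : LA.Sentence :=
  BoundedFormula.all (BoundedFormula.imp
    (BoundedFormula.equal (Term.var (Sum.inr 0)) (num n)) Φ)

theorem diag_realize (Φ : LA.BoundedFormula Empty 1) (n : ℕ) :
    ℕ ⊨ diag Φ n ↔ Φ.Realize (M := ℕ) (default : Empty → ℕ) (fun _ => n) := by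
  have h : ∀ xs : Fin 1 → ℕ,
      (BoundedFormula.equal (Term.var (Sum.inr 0)) (num n) : LA.BoundedFormula Empty 1).Realize
        (M := ℕ) (default : Empty → ℕ) xs ↔ xs 0 = n := by
    intro xs
    rw [← num_realize n (Sum.elim (default : Empty → ℕ) xs)]
    simp only [num_realize]
    refine Iff.trans (b := xs 0 = (num n).realize (M := ℕ)
      (Sum.elim (default : Empty → ℕ) xs)) Iff.rfl ?_
    rw [num_realize]
  rw [Sentence.Realize, Formula.Realize, diag, BoundedFormula.realize_all]
  have hK : ∀ (xs : Fin 1 → ℕ) (x : ℕ), xs 0 = x →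
      ((BoundedFormula.imp (BoundedFormula.equal (Term.var (Sum.inr 0)) (num n)) Φ).Realize
        (M := ℕ) (default : Empty → ℕ) xs ↔
        (x = n → Φ.Realize (M := ℕ) (default : Empty → ℕ) (fun _ => x))) := by
    intro xs x hx
    have e : xs = fun _ => x := by
      funext i
      rw [Subsingleton.elim i 0, hx]
    subst e
    rw [BoundedFormula.realize_imp, h]
  refine (forall_congr' (fun x => ?_)).trans (b := ∀ x : ℕ, x = n →
    Φ.Realize (M := ℕ) (default : Empty → ℕ) (fun _ => x)) ?_
  · rw [Subsingleton.elim (@default (Empty → ℕ) Unique.instInhabited)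
      (@default (Empty → ℕ) Pi.instInhabited)]
    apply hK
    rfl
  rw [forall_eq]

theorem diag_code : ∃ D : ℕ → ℕ, DF (fun v => D (v 0)) ∧
    ∀ Φ : LA.BoundedFormula Empty 1,
      godelCode (diag Φ (Encodable.encode Φ.listEncode)) = D (Encodable.encode Φ.listEncode) := by
  let Sym := (Σ k, LA.Term (Empty ⊕ Fin k)) ⊕ ((Σ n, LA.Relations n) ⊕ ℕ)
  let c1 : ℕ := Encodable.encode (Sum.inr (Sum.inr 1) : Sym)
  let c2 : ℕ := Encodable.encode (Sum.inr (Sum.inr 0) : Sym)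
  let c3 : ℕ := Encodable.encode (Sum.inl ⟨1, Term.var (Sum.inr 0)⟩ : Sym)
  refine ⟨fun n => Nat.succ (Nat.pair c1 (Nat.succ (Nat.pair c2 (Nat.succ (Nat.pair c3
    (Nat.succ (Nat.pair (2 * Nat.pair 1 (numCode n)) n))))))), ?_, ?_⟩
  · exact DF.succ (DF.pair (DF.const _) (DF.succ (DF.pair (DF.const _) (DF.succ
      (DF.pair (DF.const _) (DF.succ (DF.pair
        ((DF.const 2).mul (DF.pair (DF.const 1) DF.numCode)) (DF.var 0))))))))
  · intro Φ
    generalize hn : Encodable.encode Φ.listEncode = n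
    have hl : (diag Φ n).listEncode = (Sum.inr (Sum.inr 1) : Sym) ::
      (Sum.inr (Sum.inr 0) : Sym) :: (Sum.inl ⟨1, Term.var (Sum.inr 0)⟩ : Sym) ::
      (Sum.inl ⟨1, num n⟩ : Sym) :: Φ.listEncode := rfl
    rw [godelCode, hl]
    rw [Encodable.encode_list_cons, Encodable.encode_list_cons, Encodable.encode_list_cons,
      Encodable.encode_list_cons, hn]
    rfl

theorem godelCode_injective : Function.Injective godelCode := by
  intro φ ψ h
  have h1 : φ.listEncode = ψ.listEncode := Encodable.encode_injective h
  have h2 := BoundedFormula.listEncode_sigma_injective (L := LA) (α := Empty)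
    (a₁ := ⟨0, φ⟩) (a₂ := ⟨0, ψ⟩) h1
  simpa using h2

/-- **Tarski's Undefinability Theorem (semantic form).** The set
`{⌜η⌝ : ℕ ⊨ η}` of Gödel codes of true sentences is not definable in ℕ. -/
theorem stmt1 :
    ¬ ∃ Γ : LA.Formula (Fin 1), ∀ n : ℕ,
      ((∃ η : LA.Sentence, godelCode η = n ∧ ℕ ⊨ η) ↔ Γ.Realize (M := ℕ) (fun _ => n)) := by
  rintro ⟨Γ, hΓ⟩
  obtain ⟨D, hD, hcode⟩ := diag_code
  have hG : DP (fun v => Γ.Realize (M := ℕ) (fun _ => v 0)) :=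
    ⟨Formula.relabel (fun _ => 0) Γ, fun v => by rw [Formula.realize_relabel]; rfl⟩
  obtain ⟨φ, hφ⟩ := (DP.comp1 (R := fun x => Γ.Realize (M := ℕ) (fun _ => x)) hG hD).not
  let Φ : LA.BoundedFormula Empty 1 :=
    BoundedFormula.relabel (n := 1) (k := 0) (fun _ : ℕ => (Sum.inr 0 : Empty ⊕ Fin 1)) φ
  have hΦ : ∀ n : ℕ, Φ.Realize (M := ℕ) (default : Empty → ℕ) (fun _ => n) ↔
      ¬ Γ.Realize (M := ℕ) (fun _ => D n) := by
    intro n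
    refine Iff.trans ?_ (hφ (fun _ => n))
    show (BoundedFormula.relabel (n := 1) (k := 0) _ φ).Realize _ _ ↔ _
    rw [BoundedFormula.realize_relabel, Formula.Realize]
    exact iff_of_eq (congrArg₂ _ rfl (Subsingleton.elim _ _))
  have key := diag_realize Φ (Encodable.encode Φ.listEncode)
  rw [hΦ, ← hcode, ← hΓ] at key
  by_cases ht : ℕ ⊨ diag Φ (Encodable.encode Φ.listEncode)
  · exact key.1 ht ⟨_, rfl, ht⟩
  · refine ht (key.2 ?_)
    rintro ⟨η, he, hη⟩
    rw [godelCode_injective he] at hη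
    exact ht hη
end

section
/- If T is a consistent extension of Robinson's arithmetic, then for no formula Ψ(x) does T contain the set TB^Ψ = {Ψ(⌜β⌝) ↔ β : β a sentence} of all truth biconditionals. -/
open FirstOrder Language

namespace TarskiQ

section Abstract

/-- The axioms of Robinson arithmetic (without the order) on an algebraic structure. -/
structure IsQ (M : Type*) [Zero M] [One M] [Add M] [Mul M] : Prop where
  succ_ne : ∀ x : M, x + 1 ≠ 0
  succ_inj : ∀ x y : M, x + 1 = y + 1 → x = y
  pred : ∀ x : M, x ≠ 0 → ∃ y, x = y + 1
  add_zero : ∀ x : M, x + 0 = x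
  add_succ : ∀ x y : M, x + (y + 1) = (x + y) + 1
  mul_zero : ∀ x : M, x * 0 = 0
  mul_succ : ∀ x y : M, x * (y + 1) = x * y + x

variable {M : Type*} [Zero M] [One M] [Add M] [Mul M]

/-- The value of the `n`-th numeral. -/
def num (M : Type*) [Zero M] [One M] [Add M] : ℕ → M
  | 0 => 0
  | n + 1 => num M n + 1

/-- The auxiliary order used for bounded quantifiers. -/
def Le (x y : M) : Prop := ∃ z, z + x = y

/-- Graph of the beta function, with quotient bounded by `u`. -/
def Bt (s t i a u : M) : Prop :=
  ∃ q, Le q u ∧ (s = q * ((i + 1) * t + 1) + a ∧ Le a ((i + 1) * t))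

/-- The step polynomial. -/
def stp (a : M) : M := (a * a + num M 4) * (a * a + num M 4) + num M 6

/-- `u` bounds a computation showing that the `x`-th iterate is `w`. -/
def Theta (x w u : M) : Prop :=
  ∃ s, Le s u ∧ ∃ t, Le t u ∧ (Bt s t 0 (num M 127) u ∧
    ((∀ i, Le i x → i ≠ x → ∃ a, Le a u ∧ ∃ b, Le b u ∧
      (Bt s t i a u ∧ Bt s t (i + 1) b u ∧ b = stp a)) ∧ Bt s t x w u))

/-- The representing relation. -/
def Chi (x w : M) : Prop :=
  ∃ u, Theta x w u ∧ (Le w u ∧ ∀ p, Le p u → p ≠ u → ∀ r, Le r p → ¬ Theta x r p)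

/-- The diagonal polynomial. -/
def dia (w x : M) : M :=
  let t := num M 2 * (w * w + num M 1)
  let z1 := t * t + t + x + num M 1
  let z2 := z1 * z1 + num M 101
  let z3 := z2 * z2 + num M 4
  z3 * z3 + num M 8

theorem num_nat (n : ℕ) : num ℕ n = n := by
  induction n with
  | zero => rfl
  | succ n ih => simp [num, ih]

theorem le_nat (a b : ℕ) : Le a b ↔ a ≤ b := by
  constructor
  · rintro ⟨z, rfl⟩; omega
  · intro h; exact ⟨b - a, by omega⟩

namespace IsQ


theorem zero_add_one (h : IsQ M) : (0 : M) + 1 = 1 := by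
  have h1 : (1 : M) ≠ 0 := by
    intro e
    apply h.succ_ne 0
    rw [e, h.add_zero]
  obtain ⟨y, hy⟩ := h.pred 1 h1
  have h2 : ∀ x : M, x + y = x := by
    intro x
    apply h.succ_inj
    rw [← h.add_succ, ← hy]
  by_cases hy0 : y = 0
  · rw [hy0] at hy; exact hy.symm
  · obtain ⟨z, hz⟩ := h.pred y hy0
    have := h2 0
    rw [hz, h.add_succ] at this
    exact absurd this (h.succ_ne _)

theorem num_one (h : IsQ M) : num M 1 = 1 := h.zero_add_one

theorem num_add (h : IsQ M) (a b : ℕ) : num M (a + b) = num M a + num M b := by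
  induction b with
  | zero => simp [num, h.add_zero]
  | succ b ih => rw [← Nat.add_assoc]; simp only [num]; rw [h.add_succ, ih]

theorem num_mul (h : IsQ M) (a b : ℕ) : num M (a * b) = num M a * num M b := by
  induction b with
  | zero => simp [num, h.mul_zero]
  | succ b ih => rw [Nat.mul_succ, h.num_add, ih]; simp only [num]; rw [h.mul_succ]

theorem num_inj (h : IsQ M) {a b : ℕ} : num M a = num M b ↔ a = b := by
  refine ⟨?_, fun e => by rw [e]⟩
  induction a generalizing b with
  | zero =>
    cases b with
    | zero => intro; rfl
    | succ b => intro e; exact absurd e.symm (h.succ_ne _)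
  | succ a ih =>
    cases b with
    | zero => intro e; exact absurd e (h.succ_ne _)
    | succ b => intro e; rw [ih (h.succ_inj _ _ e)]

theorem le_num (h : IsQ M) {x : M} {n : ℕ} : Le x (num M n) ↔ ∃ m, m ≤ n ∧ x = num M m := by
  constructor
  · induction n generalizing x with
    | zero =>
      rintro ⟨z, hz⟩
      by_cases hx : x = 0
      · exact ⟨0, le_rfl, hx⟩
      · obtain ⟨y, rfl⟩ := h.pred x hx
        rw [h.add_succ] at hz
        exact absurd hz (h.succ_ne _)
    | succ n ih =>
      rintro ⟨z, hz⟩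
      by_cases hx : x = 0
      · exact ⟨0, Nat.zero_le _, hx⟩
      · obtain ⟨y, rfl⟩ := h.pred x hx
        rw [h.add_succ] at hz
        obtain ⟨m, hm, e⟩ := ih ⟨z, h.succ_inj _ _ hz⟩
        exact ⟨m + 1, by omega, by rw [e]; rfl⟩
  · rintro ⟨m, hm, rfl⟩
    exact ⟨num M (n - m), by rw [← h.num_add]; congr 1; omega⟩

theorem le_total (h : IsQ M) (x : M) (n : ℕ) : Le x (num M n) ∨ Le (num M n) x := by
  induction n generalizing x with
  | zero => exact Or.inr ⟨x, h.add_zero x⟩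
  | succ n ih =>
    by_cases hx : x = 0
    · left; rw [h.le_num]; exact ⟨0, Nat.zero_le _, hx⟩
    · obtain ⟨y, rfl⟩ := h.pred x hx
      rcases ih y with ⟨z, hz⟩ | ⟨z, hz⟩
      · left; exact ⟨z, by rw [h.add_succ, hz]; rfl⟩
      · right; exact ⟨z, by simp only [num]; rw [h.add_succ, hz]⟩

theorem le_num_num (h : IsQ M) {m n : ℕ} : Le (num M m) (num M n) ↔ Le m n := by
  rw [h.le_num, le_nat]
  constructor
  · rintro ⟨k, hk, e⟩; rw [h.num_inj] at e; omega
  · intro hk; exact ⟨m, hk, rfl⟩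

theorem ex_le (h : IsQ M) {P : M → Prop} {n : ℕ} :
    (∃ x, Le x (num M n) ∧ P x) ↔ ∃ m, Le m n ∧ P (num M m) := by
  constructor
  · rintro ⟨x, hx, hP⟩
    obtain ⟨m, hm, rfl⟩ := h.le_num.1 hx
    exact ⟨m, (le_nat _ _).2 hm, hP⟩
  · rintro ⟨m, hm, hP⟩
    exact ⟨_, h.le_num_num.2 hm, hP⟩

theorem all_le (h : IsQ M) {P : M → Prop} {n : ℕ} :
    (∀ x, Le x (num M n) → P x) ↔ ∀ m, Le m n → P (num M m) := by
  constructor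
  · intro H m hm
    exact H _ (h.le_num_num.2 hm)
  · intro H x hx
    obtain ⟨m, hm, rfl⟩ := h.le_num.1 hx
    exact H m ((le_nat _ _).2 hm)

theorem bt_num (h : IsQ M) {s t i a u : ℕ} :
    Bt (num M s) (num M t) (num M i) (num M a) (num M u) ↔ Bt s t i a u := by
  unfold Bt
  rw [h.ex_le]
  simp only [← h.num_one, ← h.num_add, ← h.num_mul, h.num_inj, h.le_num_num]

theorem stp_num (h : IsQ M) {a : ℕ} : stp (num M a) = num M (stp a) := by
  unfold stp
  simp only [← h.num_add, ← h.num_mul, num_nat]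

theorem dia_num (h : IsQ M) {a b : ℕ} : dia (num M a) (num M b) = num M (dia a b) := by
  unfold dia
  simp only [← h.num_add, ← h.num_mul, num_nat]

theorem theta_num (h : IsQ M) {x w u : ℕ} :
    Theta (num M x) (num M w) (num M u) ↔ Theta x w u := by
  unfold Theta
  have e0 : (0 : M) = num M 0 := rfl
  simp only [h.ex_le, h.all_le, e0, ← h.num_one, ← h.num_add, h.bt_num, h.stp_num, h.num_inj,
    num_nat, ne_eq]

end IsQ

theorem bt_nat {s t i a u : ℕ} : Bt s t i a u → a = s % ((i + 1) * t + 1) := by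
  rintro ⟨q, -, rfl, ha⟩
  rw [le_nat] at ha
  rw [Nat.mul_comm q, Nat.mul_add_mod, Nat.mod_eq_of_lt (by omega)]

theorem bt_nat_mk {s t i a u : ℕ} (hs : s ≤ u) (ha : a = s % ((i + 1) * t + 1)) :
    Bt s t i a u := by
  refine ⟨s / ((i + 1) * t + 1), ?_, ?_, ?_⟩
  · rw [le_nat]; exact (Nat.div_le_self _ _).trans hs
  · rw [ha, Nat.mul_comm]; exact (Nat.div_add_mod _ _).symm
  · rw [le_nat, ha]
    exact Nat.lt_succ_iff.1 (Nat.mod_lt _ (Nat.succ_pos _))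

/-- The iteration. -/
def itr : ℕ → ℕ
  | 0 => 127
  | n + 1 => stp (itr n)

theorem lt_stp (a : ℕ) : a < stp a := by
  simp only [stp, num_nat]
  nlinarith [Nat.zero_le a]

theorem itr_mono : Monotone itr :=
  monotone_nat_of_le_succ fun n => (lt_stp (itr n)).le

theorem le_itr (n : ℕ) : n + 127 ≤ itr n := by
  induction n with
  | zero => exact le_rfl
  | succ n ih => have := lt_stp (itr n); simp only [itr]; omega

theorem theta_fun {x w u : ℕ} (H : Theta x w u) : w = itr x := by
  obtain ⟨s, -, t, -, h0, hi, hx⟩ := H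
  have key : ∀ i, i ≤ x → itr i = s % ((i + 1) * t + 1) := by
    intro i
    induction i with
    | zero => intro _; rw [← bt_nat h0, num_nat]; rfl
    | succ i ih =>
      intro hix
      obtain ⟨a, -, b, -, ha, hb, e⟩ := hi i ((le_nat _ _).2 (by omega)) (by omega)
      rw [← bt_nat hb, e, bt_nat ha, ← ih (by omega)]
      rfl
  rw [bt_nat hx, key x le_rfl]

theorem theta_ex (x : ℕ) : ∃ u, Theta x (itr x) u ∧ itr x ≤ u := by
  let l := (List.range (x + 1)).map itr
  let c := Nat.unbeta l
  have key : ∀ i, i ≤ x → itr i = c.unpair.1 % ((i + 1) * c.unpair.2 + 1) := by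
    intro i hi
    have := Nat.beta_unbeta_coe l ⟨i, by simp [l]; omega⟩
    simp only [Nat.beta] at this
    simp only [c]
    rw [this]
    simp [l]
  refine ⟨c.unpair.1 + c.unpair.2 + itr x, ⟨c.unpair.1, ?_, c.unpair.2, ?_, ?_, ?_, ?_⟩, ?_⟩
  · rw [le_nat]; omega
  · rw [le_nat]; omega
  · refine bt_nat_mk (by omega) ?_
    rw [← key 0 (by omega), num_nat]; rfl
  · intro i hi hne
    rw [le_nat] at hi
    have h1 := itr_mono hi
    have h2 := itr_mono (show i + 1 ≤ x by omega)
    refine ⟨itr i, ?_, itr (i + 1), ?_, bt_nat_mk (by omega) (key i hi),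
      bt_nat_mk (by omega) (key (i + 1) (by omega)), rfl⟩
    · rw [le_nat]; omega
    · rw [le_nat]; omega
  · exact bt_nat_mk (by omega) (key x le_rfl)
  · omega

theorem chi_num (h : IsQ M) (n : ℕ) (w : M) : Chi (num M n) w ↔ w = num M (itr n) := by
  classical
  have hex : ∃ u, Theta n (itr n) u ∧ itr n ≤ u := theta_ex n
  let u0 := Nat.find hex
  have hu0 : Theta n (itr n) u0 ∧ itr n ≤ u0 := Nat.find_spec hex
  have hmin : ∀ u, u < u0 → ¬ (Theta n (itr n) u ∧ itr n ≤ u) := fun u hu => Nat.find_min hex hu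
  constructor
  · rintro ⟨u, hT, hwu, hall⟩
    have hu : ∃ m, m ≤ u0 ∧ u = num M m := by
      rcases h.le_total u u0 with hle | hge
      · exact h.le_num.1 hle
      · by_cases e : num M u0 = u
        · exact ⟨u0, le_rfl, e.symm⟩
        · exact absurd (h.theta_num.2 hu0.1)
            (hall _ hge e _ (h.le_num_num.2 ((le_nat _ _).2 hu0.2)))
    obtain ⟨m, hm, rfl⟩ := hu
    obtain ⟨k, hk, rfl⟩ := h.le_num.1 hwu
    rw [theta_fun (h.theta_num.1 hT)]
  · rintro rfl
    refine ⟨num M u0, h.theta_num.2 hu0.1, h.le_num_num.2 ((le_nat _ _).2 hu0.2), ?_⟩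
    intro p hp hne r hr hT
    obtain ⟨m, hm, rfl⟩ := h.le_num.1 hp
    obtain ⟨k, hk, rfl⟩ := h.le_num.1 hr
    have hT' := h.theta_num.1 hT
    have e := theta_fun hT'
    subst e
    rw [ne_eq, h.num_inj] at hne
    exact hmin m (by omega) ⟨hT', hk⟩

end Abstract

section Formulas

/-- Sum of terms. -/
def tadd {α : Type} (a b : LA.Term α) : LA.Term α := Functions.apply₂ (L := LA) ArithFunc.add a b

/-- Product of terms. -/
def tmul {α : Type} (a b : LA.Term α) : LA.Term α := Functions.apply₂ (L := LA) ArithFunc.mul a b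

/-- The constant zero. -/
def tzero {α : Type} : LA.Term α := Constants.term (L := LA) ArithFunc.zero

/-- The constant one. -/
def tone {α : Type} : LA.Term α := Constants.term (L := LA) ArithFunc.one

/-- Our own numerals. -/
def nm (α : Type) : ℕ → LA.Term α
  | 0 => tadd tzero tzero
  | n + 1 => tadd tone (nm α n)

/-- The algebraic operations agree with the first-order structure. -/
structure Compat (M : Type*) [LA.Structure M] [Zero M] [One M] [Add M] [Mul M] : Prop where
  zero : ∀ v, Structure.funMap (L := LA) (M := M) ArithFunc.zero v = 0
  one : ∀ v, Structure.funMap (L := LA) (M := M) ArithFunc.one v = 1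
  add : ∀ v, Structure.funMap (L := LA) (M := M) ArithFunc.add v = v 0 + v 1
  mul : ∀ v, Structure.funMap (L := LA) (M := M) ArithFunc.mul v = v 0 * v 1

variable {M : Type*} [LA.Structure M] [Zero M] [One M] [Add M] [Mul M]

theorem realize_tadd (hc : Compat M) {α : Type} (a b : LA.Term α) (v : α → M) :
    (tadd a b).realize v = a.realize v + b.realize v := by
  simp only [tadd, Functions.apply₂, Term.realize]
  exact hc.add _

theorem realize_tmul (hc : Compat M) {α : Type} (a b : LA.Term α) (v : α → M) :
    (tmul a b).realize v = a.realize v * b.realize v := by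
  simp only [tmul, Functions.apply₂, Term.realize]
  exact hc.mul _

theorem realize_tzero (hc : Compat M) {α : Type} (v : α → M) :
    (tzero : LA.Term α).realize v = 0 := by
  simp only [tzero, Constants.term, Term.realize]
  exact hc.zero _

theorem realize_tone (hc : Compat M) {α : Type} (v : α → M) :
    (tone : LA.Term α).realize v = 1 := by
  simp only [tone, Constants.term, Term.realize]
  exact hc.one _

theorem one_add_num (h : IsQ M) (n : ℕ) : 1 + num M n = num M (n + 1) := by
  rw [← h.num_one, ← h.num_add, Nat.add_comm]

theorem realize_nm (hc : Compat M) (h : IsQ M) {α : Type} (v : α → M) (n : ℕ) :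
    (nm α n).realize v = num M n := by
  induction n with
  | zero => simp only [nm, realize_tadd hc, realize_tzero hc, num, h.add_zero]
  | succ n ih => simp only [nm, realize_tadd hc, realize_tone hc, ih, one_add_num h]

theorem realize_numeral (hc : Compat M) (h : IsQ M) {α : Type} (v : α → M) (n : ℕ) :
    (numeral α n).realize v = num M n := by
  induction n with
  | zero => exact realize_tzero hc v
  | succ n ih =>
    cases n with
    | zero => rw [h.num_one]; exact realize_tone hc v
    | succ n =>
      have : numeral α (n + 1 + 1) = tadd tone (numeral α (n + 1)) := rfl
      rw [this, realize_tadd hc, realize_tone hc, ih, one_add_num h]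

/-- Existential quantification over the named variable `i`. -/
def exF (i : ℕ) (F : LA.Formula ℕ) : LA.Formula ℕ :=
  BoundedFormula.ex (n := 0)
    (BoundedFormula.relabel (n := 1) (fun j => if j = i then Sum.inr 0 else Sum.inl j) F)

theorem realize_exF (i : ℕ) (F : LA.Formula ℕ) (v : ℕ → M) :
    (exF i F).Realize v ↔ ∃ x : M, F.Realize (Function.update v i x) := by
  unfold exF Formula.Realize
  rw [BoundedFormula.realize_ex]
  refine exists_congr fun x => ?_
  erw [BoundedFormula.realize_relabel]
  apply iff_of_eq
  congr 1
  · funext j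
    by_cases hj : j = i
    · subst hj; simp [Fin.snoc]
    · simp [hj]
  · exact Subsingleton.elim _ _

/-- Universal quantification over the named variable `i`. -/
def allF (i : ℕ) (F : LA.Formula ℕ) : LA.Formula ℕ := (exF i F.not).not

theorem realize_allF (i : ℕ) (F : LA.Formula ℕ) (v : ℕ → M) :
    (allF i F).Realize v ↔ ∀ x : M, F.Realize (Function.update v i x) := by
  simp only [allF, Formula.realize_not, realize_exF, not_exists, not_not]

/-- The formula for `Le`. -/
def leF (a b : LA.Term ℕ) : LA.Formula ℕ :=
  BoundedFormula.ex (n := 0)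
    (Term.bdEqual (n := 1) (tadd (Term.var (Sum.inr 0)) (a.relabel Sum.inl)) (b.relabel Sum.inl))

theorem realize_leF (hc : Compat M) (a b : LA.Term ℕ) (v : ℕ → M) :
    (leF a b).Realize v ↔ Le (a.realize v) (b.realize v) := by
  unfold leF Formula.Realize Le
  rw [BoundedFormula.realize_ex]
  refine exists_congr fun x => ?_
  rw [BoundedFormula.realize_bdEqual, realize_tadd hc, Term.realize_relabel, Term.realize_relabel]
  simp [Fin.snoc, Function.comp_def]

/-- Variables. -/
def vr (i : ℕ) : LA.Term ℕ := Term.var i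

theorem realize_vr (i : ℕ) (v : ℕ → M) : (vr i).realize v = v i := rfl

/-- Equality of terms. -/
def eqF (a b : LA.Term ℕ) : LA.Formula ℕ := Term.equal a b

theorem realize_eqF (a b : LA.Term ℕ) (v : ℕ → M) :
    (eqF a b).Realize v ↔ a.realize v = b.realize v := Formula.realize_equal

/-- Conjunction. -/
def andF (F G : LA.Formula ℕ) : LA.Formula ℕ := (F.imp G.not).not

theorem realize_andF (F G : LA.Formula ℕ) (v : ℕ → M) :
    (andF F G).Realize v ↔ F.Realize v ∧ G.Realize v := by
  simp only [andF, Formula.realize_not, Formula.realize_imp]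
  tauto

/-- The formula for `Bt`. -/
def btF (s t i a u : LA.Term ℕ) : LA.Formula ℕ :=
  exF 50 (andF (leF (vr 50) u)
    (andF (eqF s (tadd (tmul (vr 50) (tadd (tmul (tadd i tone) t) tone)) a))
      (leF a (tmul (tadd i tone) t))))

/-- The term for `stp`. -/
def tstp (a : LA.Term ℕ) : LA.Term ℕ :=
  tadd (tmul (tadd (tmul a a) (nm ℕ 4)) (tadd (tmul a a) (nm ℕ 4))) (nm ℕ 6)

/-- The formula for `Theta`. -/
def thetaF (x w u : ℕ) : LA.Formula ℕ :=
  exF 40 (andF (leF (vr 40) (vr u)) (exF 41 (andF (leF (vr 41) (vr u))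
    (andF (btF (vr 40) (vr 41) tzero (nm ℕ 127) (vr u))
      (andF (allF 42 ((leF (vr 42) (vr x)).imp ((eqF (vr 42) (vr x)).not.imp
        (exF 43 (andF (leF (vr 43) (vr u)) (exF 44 (andF (leF (vr 44) (vr u))
          (andF (btF (vr 40) (vr 41) (vr 42) (vr 43) (vr u))
            (andF (btF (vr 40) (vr 41) (tadd (vr 42) tone) (vr 44) (vr u))
              (eqF (vr 44) (tstp (vr 43)))))))))))) 
        (btF (vr 40) (vr 41) (vr x) (vr w) (vr u)))))))

theorem realize_thetaF (hc : Compat M) (h : IsQ M) (x w u : ℕ) (hx : x < 40) (hw : w < 40)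
    (hu : u < 40) (v : ℕ → M) : (thetaF x w u).Realize v ↔ Theta (v x) (v w) (v u) := by
  have ex : ∀ k, 40 ≤ k → x ≠ k := by omega
  have ew : ∀ k, 40 ≤ k → w ≠ k := by omega
  have eu : ∀ k, 40 ≤ k → u ≠ k := by omega
  unfold thetaF Theta btF Bt tstp stp
  simp [realize_exF, realize_andF, realize_allF, realize_leF hc, realize_eqF, realize_vr,
    Formula.realize_imp, Formula.realize_not, realize_tadd hc, realize_tmul hc, realize_tzero hc,
    realize_tone hc, realize_nm hc h, Function.update_apply, ex, ew, eu]

/-- The formula for `Chi`. -/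
def chiF : LA.Formula ℕ :=
  exF 2 (andF (thetaF 0 1 2) (andF (leF (vr 1) (vr 2))
    (allF 3 ((leF (vr 3) (vr 2)).imp ((eqF (vr 3) (vr 2)).not.imp
      (allF 4 ((leF (vr 4) (vr 3)).imp (thetaF 0 4 3).not)))))))

theorem realize_chiF (hc : Compat M) (h : IsQ M) (v : ℕ → M) :
    chiF.Realize v ↔ Chi (v 0) (v 1) := by
  unfold chiF Chi
  simp [realize_exF, realize_andF, realize_allF, realize_leF hc, realize_eqF, realize_vr,
    Formula.realize_imp, Formula.realize_not, realize_thetaF hc h, Function.update_apply]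

/-- The term for `dia`. -/
def tdia (w x : LA.Term ℕ) : LA.Term ℕ :=
  let t := tmul (nm ℕ 2) (tadd (tmul w w) (nm ℕ 1))
  let z1 := tadd (tadd (tadd (tmul t t) t) x) (nm ℕ 1)
  let z2 := tadd (tmul z1 z1) (nm ℕ 101)
  let z3 := tadd (tmul z2 z2) (nm ℕ 4)
  tadd (tmul z3 z3) (nm ℕ 8)

theorem realize_tdia (hc : Compat M) (h : IsQ M) (w x : LA.Term ℕ) (v : ℕ → M) :
    (tdia w x).realize v = dia (w.realize v) (x.realize v) := by
  simp only [tdia, dia, realize_tadd hc, realize_tmul hc, realize_nm hc h]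

/-- The formula `¬ Ψ(d(x))`. -/
def phiF (Ψ : LA.Formula (Fin 1)) : LA.Formula ℕ :=
  exF 1 (andF chiF (Formula.not (Ψ.subst (fun _ => tdia (vr 1) (vr 0)))))

theorem realize_toB (F : LA.Formula ℕ) (e : Empty → M) (xs : Fin 1 → M) :
    BoundedFormula.Realize (l := 1) (BoundedFormula.relabel (n := 1) (k := 0)
      (fun _ => (Sum.inr 0 : Empty ⊕ Fin 1)) F) e xs ↔ F.Realize (fun _ => xs 0) := by
  unfold Formula.Realize
  erw [BoundedFormula.realize_relabel]
  apply iff_of_eq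
  congr 1
  exact Subsingleton.elim _ _

/-- The same formula with one de Bruijn variable. -/
def phiB (Ψ : LA.Formula (Fin 1)) : LA.BoundedFormula Empty 1 :=
  BoundedFormula.relabel (n := 1) (k := 0) (fun _ => Sum.inr 0) (phiF Ψ)

theorem realize_phiB (hc : Compat M) (h : IsQ M) (Ψ : LA.Formula (Fin 1)) (n : ℕ)
    (e : Empty → M) (xs : Fin 1 → M) (hxs : xs 0 = num M n) :
    (phiB Ψ).Realize e xs ↔ ¬ Ψ.Realize (fun _ => num M (dia (itr n) n)) := by
  have h1 : (phiB Ψ).Realize e xs ↔ (phiF Ψ).Realize (fun _ => num M n) := by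
    rw [← hxs]
    exact realize_toB (phiF Ψ) e xs
  rw [h1]
  unfold phiF
  have h2 : ∀ v : ℕ → M, Formula.Realize (Ψ.subst (fun _ => tdia (vr 1) (vr 0))) v ↔
      Ψ.Realize (fun _ => dia (v 1) (v 0)) := by
    intro v
    unfold Formula.Realize
    rw [BoundedFormula.realize_subst]
    simp only [realize_tdia hc h, realize_vr]
  simp [realize_exF, realize_andF, realize_chiF hc h, Formula.realize_not, h2, chi_num h,
    h.dia_num, Function.update_apply]

/-- The diagonal sentence. -/
def diagS (φ : LA.BoundedFormula Empty 1) (n : ℕ) : LA.Sentence :=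
  BoundedFormula.all (BoundedFormula.imp
    (BoundedFormula.equal (Term.var (Sum.inr 0)) (nm (Empty ⊕ Fin 1) n)) φ)

theorem realize_diagS (hc : Compat M) (h : IsQ M) (Ψ : LA.Formula (Fin 1)) (n : ℕ) :
    M ⊨ diagS (phiB Ψ) n ↔ ¬ Ψ.Realize (fun _ => num M (dia (itr n) n)) := by
  unfold diagS Sentence.Realize Formula.Realize
  simp only [BoundedFormula.Realize, realize_nm hc h]
  constructor
  · intro H
    exact (realize_phiB hc h Ψ n _ _ (by simp [Fin.snoc])).1 (H (num M n) (by simp [Fin.snoc]))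
  · intro H x hx
    refine (realize_phiB hc h Ψ n _ _ ?_).2 H
    simpa using hx

theorem pair_lt {a b : ℕ} (hab : a < b) : Nat.pair a b = b * b + a := by
  simp [Nat.pair, hab]

theorem pair_ge {a b : ℕ} (hab : b ≤ a) : Nat.pair a b = a * a + a + b := by
  simp [Nat.pair, hab]

theorem encode_nm (k n : ℕ) : Encodable.encode (nm (Empty ⊕ Fin k) n).listEncode = itr n := by
  induction n with
  | zero => 
    have e : (nm (Empty ⊕ Fin k) 0).listEncode = [Sum.inr ⟨2, ArithFunc.add⟩,
        Sum.inr ⟨0, ArithFunc.zero⟩, Sum.inr ⟨0, ArithFunc.zero⟩] := by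
      simp [nm, tadd, tzero, Functions.apply₂, Constants.term, Term.listEncode, List.finRange_succ]
    have e1 : Encodable.encode (⟨2, ArithFunc.add⟩ : Σ n, LA.Functions n) = 2 := rfl
    have e2 : Encodable.encode (⟨0, ArithFunc.zero⟩ : Σ n, LA.Functions n) = 0 := rfl
    rw [e, Encodable.encode_list_cons, Encodable.encode_list_cons, Encodable.encode_list_cons,
      Encodable.encode_list_nil, Encodable.encode_inr, Encodable.encode_inr, e1, e2]
    simp [Nat.pair, itr]
  | succ n ih =>
    have e : (nm (Empty ⊕ Fin k) (n + 1)).listEncode =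
      Sum.inr ⟨2, ArithFunc.add⟩ :: Sum.inr ⟨0, ArithFunc.one⟩ :: (nm (Empty ⊕ Fin k) n).listEncode := by
      simp [nm, tadd, tone, Functions.apply₂, Constants.term, Term.listEncode, List.finRange_succ]
    have e1 : Encodable.encode (⟨2, ArithFunc.add⟩ : Σ n, LA.Functions n) = 2 := rfl
    have e2 : Encodable.encode (⟨0, ArithFunc.one⟩ : Σ n, LA.Functions n) = 1 := rfl
    rw [e, Encodable.encode_list_cons, Encodable.encode_list_cons, ih, Encodable.encode_inr,
      Encodable.encode_inr, e1, e2]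
    have := le_itr n
    rw [pair_lt (a := 2 * 1 + 1) (by omega), pair_lt]
    · simp only [itr, stp, num_nat]
    · nlinarith

theorem encode_diagS (φ : LA.BoundedFormula Empty 1) (n : ℕ) (hn : n = Encodable.encode φ.listEncode) :
    godelCode (diagS φ n) = dia (itr n) n := by
  have e : (diagS φ n).listEncode = Sum.inr (Sum.inr 1) :: Sum.inr (Sum.inr 0) ::
      Sum.inl ⟨1, Term.var (Sum.inr 0)⟩ :: Sum.inl ⟨1, nm (Empty ⊕ Fin 1) n⟩ :: φ.listEncode := by
    simp [diagS, BoundedFormula.listEncode]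
  have e1 : Encodable.encode (⟨1, Term.var (Sum.inr 0)⟩ : Σ k, LA.Term (Empty ⊕ Fin k)) = 50 := rfl
  have e2 : Encodable.encode (⟨1, nm (Empty ⊕ Fin 1) n⟩ : Σ k, LA.Term (Empty ⊕ Fin k)) =
      Nat.pair 1 (itr n) := by
    rw [← encode_nm 1 n]; rfl
  have := le_itr n
  unfold godelCode
  rw [e]
  simp only [Encodable.encode_list_cons, Encodable.encode_inr, Encodable.encode_inl, e1, e2, ← hn,
    Encodable.encode_nat]
  rw [pair_lt (a := 1) (b := itr n) (by omega)]
  generalize ht : 2 * (itr n * itr n + 1) = t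
  have ht' : n + 127 ≤ t := by nlinarith
  rw [pair_ge (a := t) (b := n) (by omega)]
  unfold dia
  simp only [num_nat, ht, Nat.succ_eq_add_one]
  generalize hz : t * t + t + n + 1 = z1
  have hz' : 127 ≤ z1 := by nlinarith
  rw [pair_lt (b := z1) (by omega)]
  generalize hz2 : z1 * z1 + 2 * 50 + 1 = z2
  have hz2' : 127 ≤ z2 := by nlinarith
  have hz2'' : z1 * z1 + 101 = z2 := by omega
  rw [pair_lt (b := z2) (by omega)]
  generalize hz3 : z2 * z2 + _ + 1 = z3
  have hz3' : 127 ≤ z3 := by nlinarith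
  have hz3'' : z2 * z2 + 4 = z3 := by omega
  rw [pair_lt (b := z3) (by omega)]

end Formulas

end TarskiQ

/-- **Syntactic Tarski's Theorem.** If `T` is a consistent extension of
Robinson's arithmetic, then for no formula `Ψ(x)` does `T` contain (prove) the
set `TB^Ψ` of all truth biconditionals `Ψ(⌜β⌝) ↔ β`. -/
theorem stmt16 (T : LA.Theory) (hQ : Q ⊆ T) (hcons : Consistent T) :
    ∀ Ψ : LA.Formula (Fin 1), ¬ ∀ β : LA.Sentence, T ⊨ᵇ diagBicond Ψ β := by
  intro Ψ H
  apply hcons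
  rw [Theory.models_sentence_iff]
  intro M
  exfalso
  have hT : ∀ σ ∈ Q, M ⊨ σ := fun σ hσ => Theory.realize_sentence_of_mem T (hQ hσ)
  let : Zero M := ⟨Structure.funMap (L := LA) ArithFunc.zero ![]⟩
  let : One M := ⟨Structure.funMap (L := LA) ArithFunc.one ![]⟩
  let : Add M := ⟨fun a b => Structure.funMap (L := LA) ArithFunc.add ![a, b]⟩
  let : Mul M := ⟨fun a b => Structure.funMap (L := LA) ArithFunc.mul ![a, b]⟩
  have hc : TarskiQ.Compat M :=
    { zero := fun v => congrArg _ (Subsingleton.elim _ _)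
      one := fun v => congrArg _ (Subsingleton.elim _ _)
      add := fun v => congrArg _ (by funext i; fin_cases i <;> rfl)
      mul := fun v => congrArg _ (by funext i; fin_cases i <;> rfl) }
  have ra : ∀ {n : ℕ} (a b : LA.Term (Empty ⊕ Fin n)) (v : Empty ⊕ Fin n → M),
    (addT a b).realize v = a.realize v + b.realize v := fun a b v => TarskiQ.realize_tadd hc a b v
  have rm : ∀ {n : ℕ} (a b : LA.Term (Empty ⊕ Fin n)) (v : Empty ⊕ Fin n → M),
    (mulT a b).realize v = a.realize v * b.realize v := fun a b v => TarskiQ.realize_tmul hc a b v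
  have rs : ∀ {n : ℕ} (a : LA.Term (Empty ⊕ Fin n)) (v : Empty ⊕ Fin n → M),
      (succT a).realize v = a.realize v + 1 := by
    intro n a v
    have := TarskiQ.realize_tadd hc a TarskiQ.tone v
    rw [TarskiQ.realize_tone hc] at this
    exact this
  have rz : ∀ {n : ℕ} (v : Empty ⊕ Fin n → M), (zeroT : LA.Term (Empty ⊕ Fin n)).realize v = 0 :=
    fun v => TarskiQ.realize_tzero hc v
  simp only [Q, Set.mem_insert_iff, Set.mem_singleton_iff, forall_eq_or_imp, forall_eq] at hT
  obtain ⟨q1, q2, q3, q4, q5, q6, q7, -⟩ := hT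
  simp [Sentence.Realize, Formula.Realize, ra, rm, rs, rz, Fin.snoc] at q1 q2 q3 q4 q5 q6 q7
  have hM : TarskiQ.IsQ M := ⟨q1, q2, q3, q4, q5, q6, q7⟩
  let φ := TarskiQ.phiB Ψ
  let n := Encodable.encode φ.listEncode
  have hd := TarskiQ.encode_diagS φ n rfl
  have h1 := TarskiQ.realize_diagS hc hM Ψ n
  have h2 : M ⊨ diagBicond Ψ (TarskiQ.diagS φ n) := (H _).realize_sentence M
  unfold diagBicond at h2
  rw [hd] at h2
  unfold Sentence.Realize at h1 h2
  rw [Formula.realize_iff] at h2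
  have h3 : Formula.Realize (Ψ.subst
      (fun _ => numeral Empty (TarskiQ.dia (TarskiQ.itr n) n))) (default : Empty → M) ↔
      Ψ.Realize (fun _ => TarskiQ.num M (TarskiQ.dia (TarskiQ.itr n) n)) := by
    unfold Formula.Realize
    rw [BoundedFormula.realize_subst]
    simp only [TarskiQ.realize_numeral hc hM]
  rw [h3] at h2
  tauto
end
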